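/- arXiv:2011.00128 — 7 statements merged into one kernel-verified Lean document; each statement's English description precedes it below -/
import Mathlib

section
/- The transvections generate the binary symplectic group Sp(2m, F₂): every matrix M over ZMod 2 with M * Ω * Mᵀ = Ω can be written as a finite product Z_{h₁} * Z_{h₂} * ⋯ * Z_{h_k} of transvection matrices with each h_i ≠ 0. -/
open Matrix

/-!
Let `B` be a nondegenerate alternating form on a finite-dimensional space and `g` an isometry of
`B`. Every vector `g x - x` is orthogonal to the fixed space of `g`, so composing `g` with a
transvection along `g x - x` keeps all fixed vectors of `g`. If `B x (g x) ≠ 0`, a suitable scalar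
makes this transvection send `g x` back to `x`, and the fixed space grows. If `B z (g z) = 0` for
every `z`, then `g x ≠ x` yields `y` with `B y (g x - x) ≠ 0`, and one transvection along `g x - x`
turns `g` into an isometry `f` with `B y (f y) = B y (g x - x) ^ 2 ≠ 0`. Hence Noetherian induction
on the fixed space writes `g` as a product of transvections.
-/

theorem exists_list_map_prod_of_mem_closure_image {ι N : Type*} [Monoid N] {f : ι → N} {s : Set ι}
    {x : N} (hx : x ∈ Submonoid.closure (f '' s)) :
    ∃ L : List ι, (∀ i ∈ L, i ∈ s) ∧ x = (L.map f).prod := by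
  induction hx using Submonoid.closure_induction_left with
  | one => exact ⟨[], by simp⟩
  | mul_left _ ha _ _ ih =>
    obtain ⟨i, hi, rfl⟩ := ha
    obtain ⟨L, hL, rfl⟩ := ih
    exact ⟨i :: L, List.forall_mem_cons.2 ⟨hi, hL⟩, by simp⟩

section CommRing

variable {R V : Type*} [CommRing R] [AddCommGroup V] [Module R V] {B : LinearMap.BilinForm R V}

/-- The symplectic transvection `x ↦ x + c * B v x • v` along `v`, as an isometry of the
alternating form `B`. -/
def symplecticTransvection (hB : B.IsAlt) (c : R) (v : V) : B →bᵢ B where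
  __ := LinearMap.transvection (c • B v) v
  map_app' x y := by
    change B (x + (c * B v x) • v) (y + (c * B v y) • v) = B x y
    simp only [map_add, map_smul, LinearMap.add_apply, LinearMap.smul_apply, smul_eq_mul,
      hB.self_eq_zero, ← hB.neg_eq v x]
    ring

/-- The nontrivial symplectic transvections of `B`, inside the monoid of endomorphisms. -/
def symplecticTransvections (hB : B.IsAlt) : Set (Module.End R V) :=
  {T | ∃ (c : R) (v : V), c ≠ 0 ∧ v ≠ 0 ∧ T = (symplecticTransvection hB c v).toLinearMap}

theorem symplecticTransvection_apply (hB : B.IsAlt) (c : R) (v x : V) :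
    symplecticTransvection hB c v x = x + (c * B v x) • v :=
  rfl

theorem symplecticTransvection_neg_mul_self (hB : B.IsAlt) (c : R) (v : V) :
    ((symplecticTransvection hB (-c) v).toLinearMap : Module.End R V) *
      (symplecticTransvection hB c v).toLinearMap = 1 := by
  ext x
  simp [symplecticTransvection_apply, hB.self_eq_zero]

theorem mem_closure_of_symplecticTransvection_comp_mem (hB : B.IsAlt) {c : R} {v : V}
    (hc : c ≠ 0) (hv : v ≠ 0) {g : B →bᵢ B}
    (hg : ((symplecticTransvection hB c v).comp g).toLinearMap ∈
      Submonoid.closure (symplecticTransvections hB)) :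
    g.toLinearMap ∈ Submonoid.closure (symplecticTransvections hB) := by
  rw [← one_mul (M := Module.End R V) g.toLinearMap, ← symplecticTransvection_neg_mul_self hB c v,
    mul_assoc]
  exact mul_mem (Submonoid.subset_closure ⟨-c, v, neg_ne_zero.2 hc, hv, rfl⟩) hg

theorem bilin_apply_sub_self_of_fixed (g : B →bᵢ B) {z : V} (hz : g z = z) (x : V) :
    B (g x - x) z = 0 := by
  have hgz : B (g x) z = B x z := by simpa only [hz] using g.map_app x z
  rw [map_sub, LinearMap.sub_apply, hgz, sub_self]

theorem fixedSubmodule_le_symplecticTransvection_comp (hB : B.IsAlt) (g : B →bᵢ B) (c : R) (x : V) :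
    g.toLinearMap.fixedSubmodule ≤
      ((symplecticTransvection hB c (g x - x)).comp g).toLinearMap.fixedSubmodule := by
  intro z hz
  replace hz : g z = z := hz
  change symplecticTransvection hB c (g x - x) (g z) = z
  rw [hz, symplecticTransvection_apply, bilin_apply_sub_self_of_fixed g hz, mul_zero, zero_smul,
    add_zero]

theorem bilin_symplecticTransvection_one_comp (hB : B.IsAlt) {g : B →bᵢ B}
    (hg : ∀ z, B z (g z) = 0) (x y : V) :
    B y ((symplecticTransvection hB 1 (g x - x)).comp g y) = B y (g x - x) ^ 2 := by
  have polarization : B x (g y) + B y (g x) = 0 := by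
    simpa [hg] using hg (x + y)
  have symmetry : B (g x - x) (g y) = B y (g x - x) := by
    simp only [map_sub, LinearMap.sub_apply, g.map_app, ← hB.neg_eq x y]
    linear_combination -polarization
  change B y (symplecticTransvection hB 1 (g x - x) (g y)) = _
  rw [symplecticTransvection_apply, map_add, map_smul, hg, symmetry, one_mul, smul_eq_mul, zero_add,
    sq]

end CommRing

section Field

variable {K V : Type*} [Field K] [AddCommGroup V] [Module K V] {B : LinearMap.BilinForm K V}

theorem symplecticTransvection_inv_sub_apply (hB : B.IsAlt) {x y : V} (hxy : B x y ≠ 0) :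
    symplecticTransvection hB (B x y)⁻¹ (y - x) y = x := by
  simp [symplecticTransvection_apply, hB.self_eq_zero, hxy]

theorem fixedSubmodule_lt_symplecticTransvection_comp (hB : B.IsAlt) {g : B →bᵢ B} {x : V}
    (hx : B x (g x) ≠ 0) :
    g.toLinearMap.fixedSubmodule <
      ((symplecticTransvection hB (B x (g x))⁻¹ (g x - x)).comp g).toLinearMap.fixedSubmodule := by
  refine SetLike.lt_iff_le_and_exists.2
    ⟨fixedSubmodule_le_symplecticTransvection_comp hB g _ x, x,
      symplecticTransvection_inv_sub_apply hB hx, fun hfix => hx ?_⟩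
  replace hfix : g x = x := hfix
  rw [hfix, hB.self_eq_zero]

theorem toLinearMap_mem_closure_symplecticTransvections [FiniteDimensional K V]
    (hB : B.IsAlt) (hnd : B.Nondegenerate) (g : B →bᵢ B) :
    g.toLinearMap ∈ Submonoid.closure (symplecticTransvections hB) := by
  induction hF : g.toLinearMap.fixedSubmodule using WellFoundedGT.induction generalizing g with
  | ind F ih =>
    subst hF
    have mem_of_bilin_ne_zero (f : B →bᵢ B)
        (hgf : g.toLinearMap.fixedSubmodule ≤ f.toLinearMap.fixedSubmodule) (x : V)
        (hx : B x (f x) ≠ 0) :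
        f.toLinearMap ∈ Submonoid.closure (symplecticTransvections hB) := by
      have hfx : f x - x ≠ 0 := fun h => hx (by rw [sub_eq_zero.1 h, hB.self_eq_zero])
      exact mem_closure_of_symplecticTransvection_comp_mem hB (inv_ne_zero hx) hfx <|
        ih _ (hgf.trans_lt (fixedSubmodule_lt_symplecticTransvection_comp hB hx)) _ rfl
    by_cases hbilin : ∀ z, B z (g z) = 0
    · by_cases hid : ∀ x, g x - x = 0
      · have hg : g.toLinearMap = 1 := LinearMap.ext fun x => sub_eq_zero.1 (hid x)
        exact hg ▸ one_mem _
      · obtain ⟨x, hx⟩ := not_forall.1 hid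
        obtain ⟨y, hy⟩ : ∃ y, B y (g x - x) ≠ 0 := not_forall.1 (mt (hnd.2 _) hx)
        refine mem_closure_of_symplecticTransvection_comp_mem hB one_ne_zero hx <|
          mem_of_bilin_ne_zero _ (fixedSubmodule_le_symplecticTransvection_comp hB g 1 x) y ?_
        rw [bilin_symplecticTransvection_one_comp hB hbilin]
        exact pow_ne_zero 2 hy
    · obtain ⟨x, hx⟩ := not_forall.1 hbilin
      exact mem_of_bilin_ne_zero g le_rfl x hx

end Field

section Matrix

variable {l R : Type*} [Fintype l] [DecidableEq l] [CommRing R]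

theorem isAlt_toBilin'_J : (J l R).toBilin'.IsAlt := by
  intro x
  simp [toBilin'_apply', J, fromBlocks_mulVec, dotProduct, Fintype.sum_sum_type, neg_mulVec,
    mul_comm]

/-- The isometry `x ↦ M *ᵥ x` of the standard symplectic form attached to a symplectic matrix. -/
def symplecticGroupIsometry {M : Matrix (l ⊕ l) (l ⊕ l) R} (hM : M ∈ symplecticGroup l R) :
    (J l R).toBilin' →bᵢ (J l R).toBilin' where
  __ := M.toLin'
  map_app' x y := by
    change (J l R).toBilin'.comp M.toLin' M.toLin' x y = _
    rw [Matrix.toBilin'_comp, SymplecticGroup.mem_iff'.1 hM]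

theorem J_mulVec_J_mulVec (v : l ⊕ l → R) : J l R *ᵥ (J l R *ᵥ v) = -v := by
  rw [mulVec_mulVec, J_squared, neg_mulVec, one_mulVec]

theorem toMatrix'_symplecticTransvection (c : R) (v : l ⊕ l → R) :
    (symplecticTransvection isAlt_toBilin'_J c v).toLinearMap.toMatrix' =
      1 + c • (J l R * vecMulVec (J l R *ᵥ v) (J l R *ᵥ v)) := by
  refine toLin'.injective (LinearMap.ext fun x => ?_)
  have hform : (J l R).toBilin' v x = -((J l R *ᵥ v) ⬝ᵥ x) := by
    rw [toBilin'_apply', dotProduct_mulVec, ← mulVec_transpose, J_transpose, neg_mulVec,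
      neg_dotProduct]
  rw [toLin'_toMatrix', LinearMap.BilinForm.Isometry.coe_toLinearMap, symplecticTransvection_apply,
    hform, toLin'_apply, add_mulVec, one_mulVec, mul_vecMulVec, J_mulVec_J_mulVec, smul_mulVec,
    vecMulVec_mulVec, op_smul_eq_smul, smul_neg, mul_neg, neg_smul, mul_smul, smul_neg]

/-- The matrices `1 + c • J h hᵀ` of the nontrivial transvections for the standard symplectic
form. The scalar `c` is a separate parameter since rescaling `h` changes it only by squares. -/
def symplecticTransvectionMatrices (l R : Type*) [Fintype l] [DecidableEq l] [CommRing R] :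
    Set (Matrix (l ⊕ l) (l ⊕ l) R) :=
  {T | ∃ (c : R) (h : l ⊕ l → R), c ≠ 0 ∧ h ≠ 0 ∧ T = 1 + c • (J l R * vecMulVec h h)}

theorem toMatrix'_mem_symplecticTransvectionMatrices {T : Module.End R (l ⊕ l → R)}
    (hT : T ∈ symplecticTransvections (isAlt_toBilin'_J (l := l) (R := R))) :
    T.toMatrix' ∈ symplecticTransvectionMatrices l R := by
  obtain ⟨c, v, hc, hv, rfl⟩ := hT
  refine ⟨c, J l R *ᵥ v, hc, fun hJv => hv ?_, toMatrix'_symplecticTransvection c v⟩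
  rw [← neg_eq_zero, ← J_mulVec_J_mulVec, hJv, mulVec_zero]

theorem stmt_5_general {K : Type*} [Field K] {M : Matrix (l ⊕ l) (l ⊕ l) K}
    (hM : M ∈ symplecticGroup l K) :
    M ∈ Submonoid.closure (symplecticTransvectionMatrices l K) := by
  have hnd : (J l K).toBilin'.Nondegenerate :=
    LinearMap.BilinForm.nondegenerate_toBilin'_iff_det_ne_zero.2 (isUnit_det_J l K).ne_zero
  have closure_le : Submonoid.closure (symplecticTransvections isAlt_toBilin'_J) ≤
      (Submonoid.closure (symplecticTransvectionMatrices l K)).comap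
        LinearMap.toMatrixAlgEquiv' :=
    Submonoid.closure_le.2 fun _ hT =>
      Submonoid.subset_closure (toMatrix'_mem_symplecticTransvectionMatrices hT)
  have hmem := closure_le <| toLinearMap_mem_closure_symplecticTransvections isAlt_toBilin'_J hnd
    (symplecticGroupIsometry hM)
  exact LinearMap.toMatrix'_toLin' M ▸ hmem

theorem symplecticTransvectionMatrices_zmod_two :
    symplecticTransvectionMatrices l (ZMod 2) =
      (fun h => 1 + J l (ZMod 2) * vecMulVec h h) '' {h | h ≠ 0} := by
  ext T
  constructor
  · rintro ⟨c, h, hc, hh, rfl⟩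
    obtain rfl : c = 1 := Fin.eq_one_of_ne_zero c hc
    exact ⟨h, hh, by rw [one_smul]⟩
  · rintro ⟨h, hh, rfl⟩
    exact ⟨1, h, one_ne_zero, hh, by rw [one_smul]⟩

end Matrix

theorem stmt_5 (m : ℕ) (hm : 1 ≤ m)
    (Ω : Matrix (Fin m ⊕ Fin m) (Fin m ⊕ Fin m) (ZMod 2))
    (hΩ : Ω = Matrix.fromBlocks 0 1 1 0)
    (Z : (Fin m ⊕ Fin m → ZMod 2) →
      Matrix (Fin m ⊕ Fin m) (Fin m ⊕ Fin m) (ZMod 2))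
    (hZ : ∀ h, Z h = 1 + Ω * Matrix.vecMulVec h h)
    (M : Matrix (Fin m ⊕ Fin m) (Fin m ⊕ Fin m) (ZMod 2))
    (hM : M * Ω * Mᵀ = Ω) :
    ∃ l : List (Fin m ⊕ Fin m → ZMod 2),
      (∀ h ∈ l, h ≠ 0) ∧ M = (l.map Z).prod := by
  have hJ : Ω = J (Fin m) (ZMod 2) := by
    rw [hΩ, J, ZModModule.neg_eq_self]
  subst hJ
  obtain rfl : Z = fun h => 1 + J (Fin m) (ZMod 2) * vecMulVec h h := funext hZ
  apply exists_list_map_prod_of_mem_closure_image (s := {h | h ≠ 0})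
  rw [← symplecticTransvectionMatrices_zmod_two]
  exact stmt_5_general (SymplecticGroup.mem_iff.2 hM)
end

section
/- Let m ≥ 2. The Pauli graph is strongly regular with parameters n = N² − 1, t = N²/2 − 2, λ = N²/4 − 3, μ = N²/4 − 1; that is, SimpleGraph.IsSRGWith holds for the Pauli graph with parameters n = 2^(2m) − 1, k = 2^(2m−1) − 2, ℓ = 2^(2m−2) − 3, μ = 2^(2m−2) − 1. -/
open Matrix

/-!
Commutation of Pauli matrices is orthogonality for the alternating form
`((a, b), (c, d)) ↦ Tr (a * d + b * c)`, which is nondegenerate because the trace form of a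
separable extension is. For a nondegenerate form each independent orthogonality condition divides
the number of vectors by the order of the field. Over `ZMod 2` two distinct nonzero vectors are
always linearly independent, so the (common) neighbors of vertices are the vectors of an orthogonal
complement of known size, minus zero and those of the given vertices that lie in it.
-/

open Module Submodule

open LinearMap (BilinForm)

section OrthogonalityGraph

variable {R M : Type*} [CommRing R] [AddCommGroup M] [Module R M] {B : BilinForm R M}

/-- The graph of nonzero vectors of `M` in which distinct vectors are adjacent when they are
orthogonal for the reflexive bilinear form `B`; the Pauli graph is the case of the symplectic form
on `𝔽₂ᵐ × 𝔽₂ᵐ`. -/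
def orthogonalityGraph (B : BilinForm R M) (hB : B.IsRefl) : SimpleGraph {v : M // v ≠ 0} where
  Adj u w := u ≠ w ∧ B u w = 0
  symm := ⟨fun _ _ h ↦ ⟨h.1.symm, hB _ _ h.2⟩⟩
  loopless := ⟨fun _ h ↦ h.1 rfl⟩

lemma mem_orthogonal_span {s : Set M} {v : M} :
    v ∈ B.orthogonal (span R s) ↔ ∀ u ∈ s, B u v = 0 :=
  span_le (p := LinearMap.ker (B.flip v))

lemma image_neighborSet_orthogonalityGraph (hB : B.IsRefl) (u : {v : M // v ≠ 0}) :
    Subtype.val '' (orthogonalityGraph B hB).neighborSet u =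
      (B.orthogonal (span R {u.val}) : Set M) \ {0, u.val} := by
  ext v
  simp only [Set.mem_image, SimpleGraph.mem_neighborSet, orthogonalityGraph, Subtype.exists,
    Set.mem_sdiff, SetLike.mem_coe, mem_orthogonal_span, Set.mem_insert_iff,
    Set.mem_singleton_iff, forall_eq]
  grind

lemma image_commonNeighbors_orthogonalityGraph (hB : B.IsRefl) (u w : {v : M // v ≠ 0}) :
    Subtype.val '' (orthogonalityGraph B hB).commonNeighbors u w =
      (B.orthogonal (span R {u.val, w.val}) : Set M) \ {0, u.val, w.val} := by
  rw [SimpleGraph.commonNeighbors, Set.image_inter Subtype.val_injective,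
    image_neighborSet_orthogonalityGraph, image_neighborSet_orthogonalityGraph]
  ext v
  simp only [Set.mem_inter_iff, Set.mem_sdiff, SetLike.mem_coe, mem_orthogonal_span,
    Set.mem_insert_iff, Set.mem_singleton_iff, forall_eq, forall_eq_or_imp]
  tauto

end OrthogonalityGraph

lemma finrank_span_pair {R M : Type*} [Ring R] [StrongRankCondition R] [AddCommGroup M]
    [Module R M] {u w : M} (h : LinearIndependent R ![u, w]) : finrank R (span R {u, w}) = 2 := by
  have : Nontrivial R := nontrivial_of_invariantBasisNumber R
  rw [← Matrix.range_cons_cons_empty u w ![], finrank_span_eq_card h, Fintype.card_fin]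

section FiniteField

variable {K V : Type*} [Field K] [AddCommGroup V] [Module K V] [FiniteDimensional K V]
  {B : BilinForm K V}

lemma ncard_orthogonal (hB : B.Nondegenerate) (W : Submodule K V) :
    (B.orthogonal W : Set V).ncard = Nat.card K ^ (finrank K V - finrank K W) := by
  rw [← LinearMap.BilinForm.finrank_orthogonal hB, ← Module.natCard_eq_pow_finrank]
  rfl

variable [Finite K]

variable (K V) in
lemma natCard_subtype_ne_zero : Nat.card {v : V // v ≠ 0} = Nat.card K ^ finrank K V - 1 := by
  have : Finite V := Module.finite_of_finite K
  rw [← Module.natCard_eq_pow_finrank (K := K), ← Set.ncard_singleton (0 : V), ← Set.ncard_compl]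
  rfl

lemma ncard_neighborSet_orthogonalityGraph (hB : B.Nondegenerate) (hAlt : B.IsAlt)
    (u : {v : V // v ≠ 0}) :
    ((orthogonalityGraph B hAlt.isRefl).neighborSet u).ncard =
      Nat.card K ^ (finrank K V - 1) - 2 := by
  have : Finite V := Module.finite_of_finite K
  have removed_subset : {0, u.val} ⊆ (B.orthogonal (span K {u.val}) : Set V) := by
    simp only [Set.insert_subset_iff, Set.singleton_subset_iff, SetLike.mem_coe, zero_mem,
      mem_orthogonal_span, Set.mem_singleton_iff, forall_eq, hAlt.self_eq_zero, and_self]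
  rw [← Set.ncard_image_of_injective _ Subtype.val_injective,
    image_neighborSet_orthogonalityGraph, Set.ncard_sdiff removed_subset, ncard_orthogonal hB,
    finrank_span_singleton u.2, Set.ncard_pair u.2.symm]

lemma ncard_commonNeighbors_orthogonalityGraph_of_adj (hB : B.Nondegenerate) (hAlt : B.IsAlt)
    {u w : {v : V // v ≠ 0}} (hind : LinearIndependent K ![u.val, w.val])
    (hadj : (orthogonalityGraph B hAlt.isRefl).Adj u w) :
    ((orthogonalityGraph B hAlt.isRefl).commonNeighbors u w).ncard =
      Nat.card K ^ (finrank K V - 2) - 3 := by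
  have : Finite V := Module.finite_of_finite K
  have removed_subset :
      {0, u.val, w.val} ⊆ (B.orthogonal (span K {u.val, w.val}) : Set V) := by
    simp only [Set.insert_subset_iff, Set.singleton_subset_iff, SetLike.mem_coe, zero_mem,
      mem_orthogonal_span, Set.mem_insert_iff, Set.mem_singleton_iff, forall_eq_or_imp, forall_eq,
      hAlt.self_eq_zero, hadj.2, hadj.symm.2, and_self]
  have ncard_removed : ({0, u.val, w.val} : Set V).ncard = 3 :=
    Set.ncard_eq_three.2
      ⟨_, _, _, u.2.symm, w.2.symm, Subtype.val_injective.ne hadj.ne, rfl⟩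
  rw [← Set.ncard_image_of_injective _ Subtype.val_injective,
    image_commonNeighbors_orthogonalityGraph, Set.ncard_sdiff removed_subset, ncard_orthogonal hB,
    finrank_span_pair hind, ncard_removed]

lemma ncard_commonNeighbors_orthogonalityGraph_of_not_adj (hB : B.Nondegenerate)
    (hAlt : B.IsAlt) {u w : {v : V // v ≠ 0}} (hind : LinearIndependent K ![u.val, w.val])
    (hadj : ¬(orthogonalityGraph B hAlt.isRefl).Adj u w) :
    ((orthogonalityGraph B hAlt.isRefl).commonNeighbors u w).ncard =
      Nat.card K ^ (finrank K V - 2) - 1 := by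
  have : Finite V := Module.finite_of_finite K
  have not_ortho : B u w ≠ 0 := fun h ↦
    hadj ⟨fun huw ↦ hind.injective.ne zero_ne_one (congrArg Subtype.val huw), h⟩
  have not_ortho' : B w u ≠ 0 := hAlt.eq_iff.not.1 not_ortho
  have removed_eq : (B.orthogonal (span K {u.val, w.val}) : Set V) \ {0, u.val, w.val} =
      (B.orthogonal (span K {u.val, w.val}) : Set V) \ {0} := by
    ext v
    simp only [Set.mem_sdiff, SetLike.mem_coe, mem_orthogonal_span, Set.mem_insert_iff,
      Set.mem_singleton_iff, forall_eq, forall_eq_or_imp]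
    grind
  rw [← Set.ncard_image_of_injective _ Subtype.val_injective,
    image_commonNeighbors_orthogonalityGraph, removed_eq,
    Set.ncard_sdiff (Set.singleton_subset_iff.2 (zero_mem _)), ncard_orthogonal hB,
    finrank_span_pair hind, Set.ncard_singleton]

end FiniteField

section SymplecticDouble

variable {R M : Type*} [CommRing R] [AddCommGroup M] [Module R M] {b : BilinForm R M}

/-- The bilinear form `(x, y) ↦ b x.1 y.2 - b x.2 y.1` on `M × M`, symplectic when `b` is symmetric
and nondegenerate; for `b` the trace form it is the commutation form of the Pauli matrices. -/
def symplecticDouble (b : BilinForm R M) : BilinForm R (M × M) :=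
  b.compl₁₂ (LinearMap.fst R M M) (LinearMap.snd R M M) -
    b.compl₁₂ (LinearMap.snd R M M) (LinearMap.fst R M M)

@[simp]
lemma symplecticDouble_apply (x y : M × M) :
    symplecticDouble b x y = b x.1 y.2 - b x.2 y.1 :=
  rfl

lemma isAlt_symplecticDouble (hb : b.IsSymm) : (symplecticDouble b).IsAlt := fun x ↦ by
  rw [symplecticDouble_apply, hb.eq, sub_self]

lemma nondegenerate_symplecticDouble (hb : b.Nondegenerate) :
    (symplecticDouble b).Nondegenerate :=
  ⟨fun x hx ↦ Prod.ext (hb.1 _ fun z ↦ by simpa using hx (0, z))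
      (hb.1 _ fun z ↦ by simpa using hx (z, 0)),
    fun y hy ↦ Prod.ext (hb.2 _ fun z ↦ by simpa using hy (0, z))
      (hb.2 _ fun z ↦ by simpa using hy (z, 0))⟩

end SymplecticDouble

section ZModTwo

variable {V : Type*} [AddCommGroup V] [Module (ZMod 2) V]

lemma linearIndependent_pair_zmod_two {u w : V} (hu : u ≠ 0) (hw : w ≠ 0) (huw : u ≠ w) :
    LinearIndependent (ZMod 2) ![u, w] := by
  rw [LinearIndependent.pair_iff' hu]
  intro a
  obtain rfl | rfl : a = 0 ∨ a = 1 := by revert a; decide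
  · simpa using hw.symm
  · simpa using huw

/-- In dimension `2` the truncation of `2 ^ 0 - 3` is harmless: no two vertices are adjacent. -/
theorem stmt_8_general [FiniteDimensional (ZMod 2) V] [Fintype {v : V // v ≠ 0}]
    {B : BilinForm (ZMod 2) V} (hB : B.Nondegenerate) (hAlt : B.IsAlt)
    [DecidableRel (orthogonalityGraph B hAlt.isRefl).Adj] :
    (orthogonalityGraph B hAlt.isRefl).IsSRGWith
      (2 ^ finrank (ZMod 2) V - 1) (2 ^ (finrank (ZMod 2) V - 1) - 2)
      (2 ^ (finrank (ZMod 2) V - 2) - 3) (2 ^ (finrank (ZMod 2) V - 2) - 1) where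
  card := by
    rw [← Nat.card_eq_fintype_card, natCard_subtype_ne_zero (ZMod 2), Nat.card_zmod]
  regular u := by
    rw [← SimpleGraph.card_neighborSet_eq_degree, Set.fintypeCard_eq_ncard,
      ncard_neighborSet_orthogonalityGraph hB hAlt, Nat.card_zmod]
  of_adj u w hadj := by
    have hind := linearIndependent_pair_zmod_two u.2 w.2 (Subtype.val_injective.ne hadj.ne)
    rw [Set.fintypeCard_eq_ncard,
      ncard_commonNeighbors_orthogonalityGraph_of_adj hB hAlt hind hadj, Nat.card_zmod]
  of_not_adj u w hne hadj := by
    have hind := linearIndependent_pair_zmod_two u.2 w.2 (Subtype.val_injective.ne hne)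
    rw [Set.fintypeCard_eq_ncard,
      ncard_commonNeighbors_orthogonalityGraph_of_not_adj hB hAlt hind hadj, Nat.card_zmod]

end ZModTwo

lemma finrank_galoisField_prod_self (p : ℕ) [Fact p.Prime] {m : ℕ} (hm : m ≠ 0) :
    finrank (ZMod p) (GaloisField p m × GaloisField p m) = 2 * m := by
  rw [finrank_prod, GaloisField.finrank p hm, two_mul]

theorem stmt_8 (m : ℕ) (hm : 2 ≤ m)
    [Fintype {v : GaloisField 2 m × GaloisField 2 m // v ≠ (0, 0)}]
    (G : SimpleGraph {v : GaloisField 2 m × GaloisField 2 m // v ≠ (0, 0)})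
    [DecidableRel G.Adj]
    (hG : ∀ u w : {v : GaloisField 2 m × GaloisField 2 m // v ≠ (0, 0)},
      G.Adj u w ↔ u ≠ w ∧
        Algebra.trace (ZMod 2) (GaloisField 2 m)
          (u.val.1 * w.val.2 + u.val.2 * w.val.1) = 0) :
    G.IsSRGWith (2 ^ (2 * m) - 1) (2 ^ (2 * m - 1) - 2)
      (2 ^ (2 * m - 2) - 3) (2 ^ (2 * m - 2) - 1) := by
  have hAlt := isAlt_symplecticDouble (Algebra.traceForm_isSymm (ZMod 2) (S := GaloisField 2 m))
  have hB := nondegenerate_symplecticDouble (traceForm_nondegenerate (ZMod 2) (GaloisField 2 m))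
  obtain rfl : G = orthogonalityGraph _ hAlt.isRefl := by
    ext u w
    rw [hG, map_add, ← CharTwo.sub_eq_add]
    rfl
  rw [← finrank_galoisField_prod_self 2 (by lia : m ≠ 0)]
  exact stmt_8_general hB hAlt
end

section
/- Two Pauli pair matrices lie in the same orbit of PSL(2,2^m) acting by right multiplication if and only if they have the same orbit invariant: for M, M' : Matrix (Fin 2) (Fin 2) F with all rows nonzero (M 0 ≠ 0, M 1 ≠ 0, M' 0 ≠ 0, M' 1 ≠ 0), there exists g ∈ Matrix.SpecialLinearGroup (Fin 2) F with M' = M * g if and only if M.det = M'.det and, for every c ∈ F, M 1 = c • M 0 implies M' 1 = c • M' 0 (i.e., when the determinant is 0, the scalar relating the two rows is the same). -/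
open Matrix

/-!
Right multiplication by `g` acts on each row by the same linear map, of determinant one, so it
preserves the determinant and every linear relation between the rows. Conversely, if the common
determinant is nonzero, then `M⁻¹ * M'` has determinant one. If it is zero, each matrix is
determined by its first row and the scalar relating its rows; the scalars agree, so it suffices to
move one first row to the other, and `SL₂` is transitive on nonzero vectors.
-/

section CommRing

variable {R : Type*} [CommRing R]

theorem row_mul_eq_smul_row_mul {l m n : Type*} [Fintype m] {M : Matrix l m R} {i j : l} {c : R}
    (h : M i = c • M j) (N : Matrix m n R) : (M * N) i = c • (M * N) j := by
  rw [mul_apply_eq_vecMul, mul_apply_eq_vecMul, h, smul_vecMul]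

theorem exists_specialLinearGroup_eq_mul_of_isUnit_det {n : Type*} [Fintype n] [DecidableEq n]
    {M M' : Matrix n n R} (hM : IsUnit M.det) (hdet : M.det = M'.det) :
    ∃ g : Matrix.SpecialLinearGroup n R, M' = M * (g : Matrix n n R) := by
  have det_quotient : (M⁻¹ * M').det = 1 := by
    rw [det_mul, ← hdet, det_nonsing_inv_mul_det M hM]
  exact ⟨⟨M⁻¹ * M', det_quotient⟩, (mul_nonsing_inv_cancel_left M M' hM).symm⟩

theorem exists_specialLinearGroup_row_zero_eq {v : Fin 2 → R} (hv : IsCoprime (v 0) (v 1)) :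
    ∃ g : Matrix.SpecialLinearGroup (Fin 2) R, (g : Matrix (Fin 2) (Fin 2) R) 0 = v := by
  obtain ⟨g, hg₀, hg₁⟩ := hv.exists_SL2_row 0
  exact ⟨g, funext (Fin.forall_fin_two.mpr ⟨hg₀, hg₁⟩)⟩

theorem exists_specialLinearGroup_vecMul_eq {v w : Fin 2 → R}
    (hv : IsCoprime (v 0) (v 1)) (hw : IsCoprime (w 0) (w 1)) :
    ∃ g : Matrix.SpecialLinearGroup (Fin 2) R, v ᵥ* (g : Matrix (Fin 2) (Fin 2) R) = w := by
  obtain ⟨A, hA⟩ := exists_specialLinearGroup_row_zero_eq hv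
  obtain ⟨B, hB⟩ := exists_specialLinearGroup_row_zero_eq hw
  refine ⟨A⁻¹ * B, ?_⟩
  rw [← hA, ← mul_apply_eq_vecMul, ← Matrix.SpecialLinearGroup.coe_mul, mul_inv_cancel_left, hB]

theorem exists_row_one_eq_smul_row_zero {M : Matrix (Fin 2) (Fin 2) R}
    (hM : IsCoprime (M 0 0) (M 0 1)) (hdet : M.det = 0) : ∃ c : R, M 1 = c • M 0 := by
  obtain ⟨u, v, bezout⟩ := hM
  rw [det_fin_two] at hdet
  refine ⟨u * M 1 0 + v * M 1 1, funext (Fin.forall_fin_two.mpr ⟨?_, ?_⟩)⟩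
  · simp only [Pi.smul_apply, smul_eq_mul]
    linear_combination -M 1 0 * bezout - v * hdet
  · simp only [Pi.smul_apply, smul_eq_mul]
    linear_combination -M 1 1 * bezout + u * hdet

theorem exists_specialLinearGroup_eq_mul_of_row_one_eq_smul {M M' : Matrix (Fin 2) (Fin 2) R}
    (hM : IsCoprime (M 0 0) (M 0 1)) (hM' : IsCoprime (M' 0 0) (M' 0 1)) {c : R}
    (hc : M 1 = c • M 0) (hc' : M' 1 = c • M' 0) :
    ∃ g : Matrix.SpecialLinearGroup (Fin 2) R, M' = M * (g : Matrix (Fin 2) (Fin 2) R) := by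
  obtain ⟨g, hg⟩ := exists_specialLinearGroup_vecMul_eq hM hM'
  have row_zero : M' 0 = (M * (g : Matrix (Fin 2) (Fin 2) R)) 0 := by
    rw [mul_apply_eq_vecMul, hg]
  have row_one : M' 1 = (M * (g : Matrix (Fin 2) (Fin 2) R)) 1 := by
    rw [hc', row_zero, row_mul_eq_smul_row_mul hc]
  exact ⟨g, funext (Fin.forall_fin_two.mpr ⟨row_zero, row_one⟩)⟩

end CommRing

section Field

variable {F : Type*} [Field F]

theorem isCoprime_apply_of_ne_zero {v : Fin 2 → F} (hv : v ≠ 0) : IsCoprime (v 0) (v 1) := by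
  rw [Semifield.isCoprime_iff]
  exact Fin.exists_fin_two.mp (Function.ne_iff.mp hv)

theorem stmt_10_general {M M' : Matrix (Fin 2) (Fin 2) F} (hM : M 0 ≠ 0) (hM' : M' 0 ≠ 0) :
    (∃ g : Matrix.SpecialLinearGroup (Fin 2) F, M' = M * (g : Matrix (Fin 2) (Fin 2) F)) ↔
      (M.det = M'.det ∧ ∀ c : F, M 1 = c • M 0 → M' 1 = c • M' 0) := by
  constructor
  · rintro ⟨g, rfl⟩
    exact ⟨by rw [det_mul, g.det_coe, mul_one], fun c hc => row_mul_eq_smul_row_mul hc _⟩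
  · rintro ⟨hdet, hscalar⟩
    rcases eq_or_ne M.det 0 with hzero | hne
    · have hcop := isCoprime_apply_of_ne_zero hM
      obtain ⟨c, hc⟩ := exists_row_one_eq_smul_row_zero hcop hzero
      exact exists_specialLinearGroup_eq_mul_of_row_one_eq_smul hcop
        (isCoprime_apply_of_ne_zero hM') hc (hscalar c hc)
    · exact exists_specialLinearGroup_eq_mul_of_isUnit_det hne.isUnit hdet

end Field

theorem stmt_10 (m : ℕ) (hm : 1 ≤ m)
    (M M' : Matrix (Fin 2) (Fin 2) (GaloisField 2 m))
    (h1 : M 0 ≠ 0) (h2 : M 1 ≠ 0) (h3 : M' 0 ≠ 0) (h4 : M' 1 ≠ 0) :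
    (∃ g : Matrix.SpecialLinearGroup (Fin 2) (GaloisField 2 m),
      M' = M * (g : Matrix (Fin 2) (Fin 2) (GaloisField 2 m))) ↔
    (M.det = M'.det ∧
      ∀ c : GaloisField 2 m, M 1 = c • M 0 → M' 1 = c • M' 0) :=
  stmt_10_general h1 h3
end

section
/- The directed edges of the Pauli graph split by type with the following counts: (i) the number of ordered pairs (u, w) ∈ (F × F)² with u ≠ 0, w ≠ 0, u ≠ w and det(u,w) = 0 (type-1 edges, where the two Paulis lie in the same maximal commutative subgroup) equals (2^(2m) − 1)(2^m − 2) = (N² − 1)(N − 2); (ii) the number of ordered pairs (u, w) ∈ (F × F)² with det(u,w) ≠ 0 and Tr(det(u,w)) = 0 (type-2 edges, commuting Paulis from different maximal commutative subgroups) equals 2^(m−1)·(2^(2m) − 1)·(2^m − 2) = N(N² − 1)(N − 2)/2. -/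
/-!
Fix `u ≠ 0`. Since the form `ω` is nondegenerate, `ω u` is a nonzero linear functional, so all its
fibres have the same size. The type-1 partners of `u` are the elements of the hyperplane
`ker (ω u)` other than `0` and `u`, which both lie in it because `ω` is alternating. The type-2
partners are the preimage under `ω u` of the nonzero elements of the kernel of the trace, which is
itself a nonzero functional over the small field. Neither count depends on `u`.
-/

theorem natCard_subtype_prod_of_natCard_fiber {α β : Type*} [Finite α] [Finite β]
    {P : α → Prop} {r : α → β → Prop} {k : ℕ} (hk : ∀ a, P a → Nat.card {b // r a b} = k) :
    Nat.card {p : α × β // P p.1 ∧ r p.1 p.2} = Nat.card {a // P a} * k := by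
  have := Fintype.ofFinite {a // P a}
  have fibration : {p : α × β // P p.1 ∧ r p.1 p.2} ≃ Σ a : {a // P a}, {b // r a b} :=
    { toFun := fun p => ⟨⟨p.1.1, p.2.1⟩, p.1.2, p.2.2⟩
      invFun := fun x => ⟨(x.1, x.2), x.1.2, x.2.2⟩ }
  rw [Nat.card_congr fibration, Nat.card_sigma,
    Finset.sum_congr rfl fun (a : {a // P a}) _ => hk a a.2, Finset.sum_const, smul_eq_mul,
    Finset.card_univ, Nat.card_eq_fintype_card]

theorem natCard_subtype_ne {α : Type*} [Finite α] (a : α) :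
    Nat.card {x : α // x ≠ a} = Nat.card α - 1 :=
  (Set.ncard_compl {a}).trans (by rw [Set.ncard_singleton])

theorem natCard_preimage_of_surjective {G H : Type*} [AddGroup G] [AddGroup H] {f : G →+ H}
    (hf : Function.Surjective f) (S : Set H) :
    Nat.card (f ⁻¹' S) = Nat.card f.ker * Nat.card S := by
  have fibration : f ⁻¹' S ≃ S × f.ker :=
    (Equiv.sigmaSubtypeFiberEquivSubtype f fun _ => Iff.rfl).symm.trans <|
      (Equiv.sigmaCongrRight fun y : S => f.fiberEquivKerOfSurjective hf y).trans <|
        Equiv.sigmaEquivProd S f.ker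
  rw [Nat.card_congr fibration, Nat.card_prod, mul_comm]

section LinearFunctional

variable {F V : Type*} [Field F] [AddCommGroup V] [Module F V] [Module.Finite F V]

theorem natCard_ker_dual_of_ne_zero {f : Module.Dual F V} (hf : f ≠ 0) :
    Nat.card f.ker = Nat.card F ^ (Module.finrank F V - 1) := by
  rw [Module.natCard_eq_pow_finrank (K := F),
    ← Module.Dual.finrank_ker_add_one_of_ne_zero hf, Nat.add_sub_cancel]

theorem natCard_preimage_dual_of_ne_zero {f : Module.Dual F V} (hf : f ≠ 0) (S : Set F) :
    Nat.card (f ⁻¹' S) = Nat.card F ^ (Module.finrank F V - 1) * Nat.card S := by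
  rw [← natCard_ker_dual_of_ne_zero hf]
  exact natCard_preimage_of_surjective (f := f.toAddMonoidHom) (f.surjective hf) S

end LinearFunctional

theorem natCard_ne_zero_and_trace_eq_zero (K F : Type*) [Field K] [Field F] [Algebra K F]
    [Finite F] :
    Nat.card {c : F // c ≠ 0 ∧ Algebra.trace K F c = 0} =
      Nat.card K ^ (Module.finrank K F - 1) - 1 := by
  have : Finite K := Finite.of_injective _ (algebraMap K F).injective
  have hker := natCard_ker_dual_of_ne_zero (Algebra.trace_ne_zero K F)
  have hset : {c : F | c ≠ 0 ∧ Algebra.trace K F c = 0} =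
      ((Algebra.trace K F).ker : Set F) \ {0} := by
    ext c
    simp [and_comm]
  rw [← hker]
  exact (congrArg Set.ncard hset).trans (Set.ncard_sdiff_singleton_of_mem (zero_mem _))

section BilinForm

open LinearMap (BilinForm)

variable {F V : Type*} [Field F] [AddCommGroup V] [Module F V] {ω : BilinForm F V}

theorem apply_ne_zero_of_separatingLeft (hω : ω.SeparatingLeft) {u : V} (hu : u ≠ 0) : ω u ≠ 0 :=
  fun h => hu (hω u fun w => by rw [h, LinearMap.zero_apply])

variable [Finite V]

theorem natCard_distinct_isOrtho_pairs (halt : ω.IsAlt) (hsep : ω.SeparatingLeft) :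
    Nat.card {p : V × V // p.1 ≠ 0 ∧ p.2 ≠ 0 ∧ p.1 ≠ p.2 ∧ ω p.1 p.2 = 0} =
      (Nat.card V - 1) * (Nat.card F ^ (Module.finrank F V - 1) - 2) := by
  rw [← natCard_subtype_ne (0 : V)]
  refine natCard_subtype_prod_of_natCard_fiber (P := (· ≠ 0))
    (r := fun u w => w ≠ 0 ∧ u ≠ w ∧ ω u w = 0) fun u hu => ?_
  have hset : {w | w ≠ 0 ∧ u ≠ w ∧ ω u w = 0} = ((ω u).ker : Set V) \ {0, u} := by
    ext w
    simp only [Set.mem_ofPred_eq, Set.mem_sdiff, SetLike.mem_coe, LinearMap.mem_ker,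
      Set.mem_insert_iff, Set.mem_singleton_iff]
    tauto
  have hsub : {0, u} ⊆ ((ω u).ker : Set V) := by
    simp [Set.insert_subset_iff, halt.self_eq_zero u]
  rw [← natCard_ker_dual_of_ne_zero (apply_ne_zero_of_separatingLeft hsep hu),
    ← Set.ncard_pair hu.symm]
  exact (congrArg Set.ncard hset).trans (Set.ncard_sdiff hsub)

theorem natCard_pairs_apply_mem (hsep : ω.SeparatingLeft) (S : Set F) :
    Nat.card {p : V × V // p.1 ≠ 0 ∧ ω p.1 p.2 ∈ S} =
      (Nat.card V - 1) * (Nat.card F ^ (Module.finrank F V - 1) * Nat.card S) := by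
  rw [← natCard_subtype_ne (0 : V)]
  exact natCard_subtype_prod_of_natCard_fiber (P := (· ≠ 0)) (r := fun u w => ω u w ∈ S)
    fun u hu => natCard_preimage_dual_of_ne_zero (apply_ne_zero_of_separatingLeft hsep hu) S

theorem natCard_pairs_trace_apply_eq_zero (K : Type*) [Field K] [Algebra K F] [Finite F]
    (hsep : ω.SeparatingLeft) :
    Nat.card {p : V × V // ω p.1 p.2 ≠ 0 ∧ Algebra.trace K F (ω p.1 p.2) = 0} =
      (Nat.card V - 1) * (Nat.card F ^ (Module.finrank F V - 1) *
        (Nat.card K ^ (Module.finrank K F - 1) - 1)) := by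
  rw [← natCard_ne_zero_and_trace_eq_zero K F]
  refine Eq.trans (Nat.card_congr <| Equiv.subtypeEquivRight fun p => ?_)
    (natCard_pairs_apply_mem hsep {c | c ≠ 0 ∧ Algebra.trace K F c = 0})
  refine ⟨fun hp => ⟨fun h => hp.1 ?_, hp⟩, And.right⟩
  rw [h, LinearMap.map_zero₂]

end BilinForm

section DetForm

/-- The determinant of the `2 × 2` matrix with rows `u` and `v`, as a bilinear form on `R × R`. -/
def detForm (R : Type*) [CommRing R] : LinearMap.BilinForm R (R × R) :=
  (LinearMap.mul R R).compl₁₂ (.fst R R R) (.snd R R R) -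
    (LinearMap.mul R R).compl₁₂ (.snd R R R) (.fst R R R)

variable {R : Type*} [CommRing R]

theorem detForm_apply (u v : R × R) : detForm R u v = u.1 * v.2 - u.2 * v.1 := rfl

theorem detForm_apply_of_charTwo [CharP R 2] (u v : R × R) :
    detForm R u v = u.1 * v.2 + u.2 * v.1 := by
  rw [detForm_apply, CharTwo.sub_eq_add]

theorem isAlt_detForm : (detForm R).IsAlt := fun u => by
  rw [detForm_apply, mul_comm, sub_self]

theorem separatingLeft_detForm : (detForm R).SeparatingLeft := fun u h => by
  ext
  · simpa [detForm_apply] using h (0, 1)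
  · simpa [detForm_apply] using h (1, 0)

end DetForm

theorem stmt_13_general {K F V : Type*} [Field K] [Field F] [Finite F] [Algebra K F]
    [AddCommGroup V] [Module F V] [Finite V] {ω : LinearMap.BilinForm F V}
    (halt : ω.IsAlt) (hsep : ω.SeparatingLeft) :
    Nat.card {p : V × V // p.1 ≠ 0 ∧ p.2 ≠ 0 ∧ p.1 ≠ p.2 ∧ ω p.1 p.2 = 0} =
      (Nat.card V - 1) * (Nat.card F ^ (Module.finrank F V - 1) - 2) ∧
    Nat.card {p : V × V // ω p.1 p.2 ≠ 0 ∧ Algebra.trace K F (ω p.1 p.2) = 0} =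
      (Nat.card V - 1) * (Nat.card F ^ (Module.finrank F V - 1) *
        (Nat.card K ^ (Module.finrank K F - 1) - 1)) :=
  ⟨natCard_distinct_isOrtho_pairs halt hsep, natCard_pairs_trace_apply_eq_zero K hsep⟩

theorem pow_mul_pow_pred_sub_one (n : ℕ) {m : ℕ} (hm : 1 ≤ m) :
    n ^ m * (n ^ (m - 1) - 1) = n ^ (m - 1) * (n ^ m - n) := by
  rw [Nat.mul_sub, Nat.mul_sub, mul_one, pow_sub_one_mul (by lia), mul_comm]

theorem natCard_pairs_detForm (K F : Type*) [Field K] [Field F] [Finite F] [Algebra K F] :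
    Nat.card {p : (F × F) × (F × F) //
        p.1 ≠ 0 ∧ p.2 ≠ 0 ∧ p.1 ≠ p.2 ∧ detForm F p.1 p.2 = 0} =
      (Nat.card K ^ (2 * Module.finrank K F) - 1) * (Nat.card K ^ Module.finrank K F - 2) ∧
    Nat.card {p : (F × F) × (F × F) //
        detForm F p.1 p.2 ≠ 0 ∧ Algebra.trace K F (detForm F p.1 p.2) = 0} =
      Nat.card K ^ (Module.finrank K F - 1) * (Nat.card K ^ (2 * Module.finrank K F) - 1) *
        (Nat.card K ^ Module.finrank K F - Nat.card K) := by
  have : Finite K := Finite.of_injective _ (algebraMap K F).injective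
  obtain ⟨type1, type2⟩ :=
    stmt_13_general (K := K) (isAlt_detForm (R := F)) separatingLeft_detForm
  rw [Nat.card_prod, Module.natCard_eq_pow_finrank (K := K) (V := F), ← pow_add, ← two_mul,
    Module.finrank_prod, Module.finrank_self, Nat.add_sub_cancel, pow_one] at type1 type2
  rw [pow_mul_pow_pred_sub_one _ Module.finrank_pos, mul_left_comm, ← mul_assoc] at type2
  exact ⟨type1, type2⟩

theorem stmt_13 (m : ℕ) (hm : 1 ≤ m)
    (Tr : GaloisField 2 m → ZMod 2)
    (hTr : Tr = Algebra.trace (ZMod 2) (GaloisField 2 m))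
    (det : (GaloisField 2 m × GaloisField 2 m) →
      (GaloisField 2 m × GaloisField 2 m) → GaloisField 2 m)
    (hdet : ∀ u v, det u v = u.1 * v.2 + u.2 * v.1) :
    Nat.card {p : (GaloisField 2 m × GaloisField 2 m) ×
        (GaloisField 2 m × GaloisField 2 m) //
      p.1 ≠ 0 ∧ p.2 ≠ 0 ∧ p.1 ≠ p.2 ∧ det p.1 p.2 = 0} =
      (2 ^ (2 * m) - 1) * (2 ^ m - 2) ∧
    Nat.card {p : (GaloisField 2 m × GaloisField 2 m) ×
        (GaloisField 2 m × GaloisField 2 m) //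
      det p.1 p.2 ≠ 0 ∧ Tr (det p.1 p.2) = 0} =
      2 ^ (m - 1) * (2 ^ (2 * m) - 1) * (2 ^ m - 2) := by
  obtain rfl : det = fun u v => detForm _ u v := by
    funext u v
    rw [hdet, detForm_apply_of_charTwo]
  subst hTr
  simpa only [Nat.card_zmod, GaloisField.finrank 2 (Nat.ne_of_gt hm)] using
    natCard_pairs_detForm (ZMod 2) (GaloisField 2 m)
end

section
/- (Transition matrix of the transvection Markov chain on non-edge orbits.) Let a, b ∈ F with a ≠ 0, b ≠ 0 and Tr(a*b) = 1, and set u := (a, 0), v := (0, b) (a representative non-edge with orbit invariant a*b). Then for every y ∈ F with Tr(y) = 1, the number of h ∈ F × F with h ≠ (0,0) and det(τ_h(u), τ_h(v)) = y equals 4^(m−1) + 3·2^(m−1) − 1 if y = a*b, and equals 3·2^(m−1) if y ≠ a*b. (Equivalently, the (N/2)×(N/2) transition matrix on non-edge orbits is Q₁ = ((N²−4)·I + 6N·J)/(4(N²−1)).) -/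
open scoped Classical

/-!
Put `d = det u v` and, for a direction `h`, `s = det u h` and `t = det v h`. Expanding the
determinant gives `det (τ_h u) (τ_h v) = d + Tr s • t + Tr t • s`, and by Cramer's rule
`h ↦ (s, t)` is a bijection of the plane as soon as `d` is a unit. So one has to count the pairs
`(s, t)` with `Tr s • t + Tr t • s = z`, where `z = y + d` has trace `0`. If `Tr s = Tr t = 0` the
equation reads `z = 0`. For each of the three other values of `(Tr s, Tr t)` exactly one of
`s`, `t`, `s + t` has trace `0`, the equation says that this one is `z`, and what remains free is an
element of trace `1`. Half of all elements have trace `1`, so these values contribute three times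
that half. The excluded direction `h = 0` is a solution exactly when `z = 0`.
-/

section Counting

theorem natCard_ker_mul_natCard {G H : Type*} [AddGroup G] [AddGroup H] {f : G →+ H}
    (hf : Function.Surjective f) : Nat.card f.ker * Nat.card H = Nat.card G := by
  rw [← f.ker.card_mul_index, AddSubgroup.index_ker, AddMonoidHom.range_eq_top_of_surjective f hf,
    AddSubgroup.card_top]

theorem ncard_eq_sum_ncard_fiber {α ι : Type*} [Finite α] [Fintype ι] (s : Set α) (g : α → ι) :
    s.ncard = ∑ i, {x ∈ s | g x = i}.ncard := by
  have : Fintype α := Fintype.ofFinite α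
  simp only [Set.ncard_eq_toFinset_card']
  rw [Finset.card_eq_sum_card_fiberwise (f := g) (t := Finset.univ) (by simp)]
  congr! 2 with i
  ext x
  simp

theorem surjective_of_apply_eq_one {S M : Type*} [Semiring S] [AddCommMonoid M] [Module S M]
    {f : M →ₗ[S] S} {w : M} (hw : f w = 1) : Function.Surjective f :=
  fun c ↦ ⟨c • w, by simp [hw]⟩

theorem ncard_fiber_eq_natCard_ker {S M N : Type*} [Ring S] [AddCommGroup M] [AddCommGroup N]
    [Module S M] [Module S N] {f : M →ₗ[S] N} (hf : Function.Surjective f) (c : N) :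
    (f ⁻¹' {c}).ncard = Nat.card f.ker :=
  Nat.card_congr (AddMonoidHom.fiberEquivKerOfSurjective (f := f.toAddMonoidHom) hf c)

variable {V : Type*} [AddCommGroup V] [Module (ZMod 2) V]

/-- The quadratic term `T s • t + T t • s` by which a transvection changes the determinant of
two vectors; `s` and `t` are the determinants of these vectors with its direction. -/
def crossTerm (T : V →ₗ[ZMod 2] ZMod 2) (s t : V) : V := T s • t + T t • s

variable {T : V →ₗ[ZMod 2] ZMod 2} {z : V}

theorem two_mul_natCard_ker (hT : Function.Surjective T) :
    2 * Nat.card T.ker = Nat.card V := by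
  simpa [mul_comm] using natCard_ker_mul_natCard (f := T.toAddMonoidHom) hT

theorem natCard_ker_eq_two_pow (hT : Function.Surjective T) {m : ℕ} (hV : Nat.card V = 2 ^ m) :
    Nat.card T.ker = 2 ^ (m - 1) := by
  have hker := hV ▸ two_mul_natCard_ker hT
  have hm : m ≠ 0 := by
    rintro rfl
    lia
  rw [← mul_pow_sub_one hm] at hker
  lia

theorem crossTerm_fiber_zero_zero :
    {p : V × V | crossTerm T p.1 p.2 = z ∧ (T p.1, T p.2) = (0, 0)} =
      if z = 0 then (T ⁻¹' {0}) ×ˢ (T ⁻¹' {0}) else ∅ := by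
  ext ⟨s, t⟩
  have zero_of_mem (hs : T s = 0) (ht : T t = 0) : crossTerm T s t = 0 := by
    simp [crossTerm, hs, ht]
  split_ifs <;>
    simp only [Set.mem_ofPred_eq, Prod.mk.injEq, Set.mem_prod, Set.mem_preimage,
      Set.mem_singleton_iff, Set.mem_empty_iff_false] <;>
    grind

theorem crossTerm_fiber_zero_one (hz : T z = 0) :
    {p : V × V | crossTerm T p.1 p.2 = z ∧ (T p.1, T p.2) = (0, 1)} = {z} ×ˢ (T ⁻¹' {1}) := by
  ext ⟨s, t⟩
  have fst_of_mem (hs : T s = 0) (ht : T t = 1) : crossTerm T s t = s := by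
    simp [crossTerm, hs, ht]
  simp only [Set.mem_ofPred_eq, Prod.mk.injEq, Set.mem_prod, Set.mem_preimage,
    Set.mem_singleton_iff]
  grind

theorem crossTerm_fiber_one_zero (hz : T z = 0) :
    {p : V × V | crossTerm T p.1 p.2 = z ∧ (T p.1, T p.2) = (1, 0)} = (T ⁻¹' {1}) ×ˢ {z} := by
  ext ⟨s, t⟩
  have snd_of_mem (hs : T s = 1) (ht : T t = 0) : crossTerm T s t = t := by
    simp [crossTerm, hs, ht]
  simp only [Set.mem_ofPred_eq, Prod.mk.injEq, Set.mem_prod, Set.mem_preimage,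
    Set.mem_singleton_iff]
  grind

theorem crossTerm_fiber_one_one (hz : T z = 0) :
    {p : V × V | crossTerm T p.1 p.2 = z ∧ (T p.1, T p.2) = (1, 1)} =
      (T ⁻¹' {1}).graphOn (z - ·) := by
  ext ⟨s, t⟩
  have add_of_mem (hs : T s = 1) (ht : T t = 1) : crossTerm T s t = t + s := by
    simp [crossTerm, hs, ht]
  simp only [Set.mem_ofPred_eq, Prod.mk.injEq, Set.mem_graphOn, Set.mem_preimage,
    Set.mem_singleton_iff]
  constructor
  · rintro ⟨hst, hs, ht⟩
    exact ⟨hs, by rw [← hst, add_of_mem hs ht, add_sub_cancel_right]⟩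
  · rintro ⟨hs, rfl⟩
    have ht : T (z - s) = 1 := by rw [map_sub, hz, hs, zero_sub, ZModModule.neg_eq_self]
    exact ⟨by rw [add_of_mem hs ht, sub_add_cancel], hs, ht⟩

theorem ncard_crossTerm_eq [Finite V] (hT : Function.Surjective T) (hz : T z = 0) :
    {p : V × V | crossTerm T p.1 p.2 = z}.ncard =
      (if z = 0 then Nat.card T.ker ^ 2 else 0) + 3 * Nat.card T.ker := by
  have sum_zmod_two (f : ZMod 2 → ℕ) : ∑ i, f i = f 0 + f 1 := Fin.sum_univ_two f
  rw [ncard_eq_sum_ncard_fiber _ fun p ↦ (T p.1, T p.2), Fintype.sum_prod_type]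
  simp only [sum_zmod_two, Set.mem_ofPred_eq, crossTerm_fiber_zero_zero,
    crossTerm_fiber_zero_one hz, crossTerm_fiber_one_zero hz, crossTerm_fiber_one_one hz,
    apply_ite Set.ncard, Set.ncard_prod, Set.ncard_graphOn, Set.ncard_singleton, Set.ncard_empty,
    ncard_fiber_eq_natCard_ker hT, ← sq]
  ring

end Counting

section Plane

variable {R : Type*} [CommRing R]

/-- The determinant of the matrix with rows `u` and `v`, written with `+` because it is only used
over rings of characteristic `2`. -/
def planeDet (u v : R × R) : R := u.1 * v.2 + u.2 * v.1

variable [Algebra (ZMod 2) R]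

/-- The transvection in direction `h` of the plane `R × R`, regarded as a symplectic space over
`ZMod 2` by means of the form `T (planeDet x h)`. -/
def planeTransvection (T : R →ₗ[ZMod 2] ZMod 2) (h x : R × R) : R × R :=
  x + T (planeDet x h) • h

variable (R) in
theorem two_eq_zero_of_algebra_zmod_two : (2 : R) = 0 := by
  rw [← one_add_one_eq_two, ZModModule.add_self]

theorem planeDet_smul_eq (u v h : R × R) :
    planeDet u v • h = planeDet v h • u + planeDet u h • v := by
  ext <;> simp only [planeDet, Prod.smul_fst, Prod.smul_snd, Prod.fst_add, Prod.snd_add,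
    smul_eq_mul]
  · linear_combination -(u.1 * v.1 * h.2) * (two_eq_zero_of_algebra_zmod_two R)
  · linear_combination -(u.2 * v.2 * h.1) * (two_eq_zero_of_algebra_zmod_two R)

theorem planeDet_pair_injective {u v : R × R} (hd : IsUnit (planeDet u v)) :
    Function.Injective fun h ↦ (planeDet u h, planeDet v h) := by
  intro h h' heq
  obtain ⟨hu, hv⟩ := Prod.mk.inj heq
  rw [← hd.smul_left_cancel, planeDet_smul_eq, planeDet_smul_eq u v h', hu, hv]

theorem planeDet_planeTransvection (T : R →ₗ[ZMod 2] ZMod 2) (h u v : R × R) :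
    planeDet (planeTransvection T h u) (planeTransvection T h v) =
      planeDet u v + crossTerm T (planeDet u h) (planeDet v h) := by
  unfold planeTransvection crossTerm
  generalize T (planeDet u h) = p
  generalize T (planeDet v h) = q
  simp only [planeDet, Prod.smul_fst, Prod.smul_snd, Prod.fst_add, Prod.snd_add]
  simp only [Algebra.smul_def]
  linear_combination algebraMap (ZMod 2) R p * algebraMap (ZMod 2) R q * h.1 * h.2 *
    (two_eq_zero_of_algebra_zmod_two R)

theorem planeTransvection_zero (T : R →ₗ[ZMod 2] ZMod 2) (x : R × R) :
    planeTransvection T 0 x = x := by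
  rw [planeTransvection, smul_zero, add_zero]

theorem ncard_planeDet_planeTransvection_eq [Finite R] {T : R →ₗ[ZMod 2] ZMod 2} {u v : R × R}
    (hd : IsUnit (planeDet u v)) (huv : T (planeDet u v) = 1) {y : R} (hy : T y = 1) :
    {h | planeDet (planeTransvection T h u) (planeTransvection T h v) = y}.ncard =
      (if y = planeDet u v then Nat.card T.ker ^ 2 else 0) + 3 * Nat.card T.ker := by
  let coords (h : R × R) : R × R := (planeDet u h, planeDet v h)
  have coords_injective : Function.Injective coords := planeDet_pair_injective hd
  have coords_range : Set.range coords = Set.univ :=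
    (Finite.surjective_of_injective coords_injective).range_eq
  have preimage_eq : {h | planeDet (planeTransvection T h u) (planeTransvection T h v) = y} =
      coords ⁻¹' {p | crossTerm T p.1 p.2 = y - planeDet u v} := by
    ext h
    simp only [Set.mem_ofPred_eq, Set.mem_preimage, planeDet_planeTransvection, coords,
      eq_sub_iff_add_eq']
  have hz : T (y - planeDet u v) = 0 := by rw [map_sub, hy, huv, sub_self]
  rw [preimage_eq, Set.ncard_preimage_of_injective_subset_range coords_injective
    (coords_range ▸ Set.subset_univ _), ncard_crossTerm_eq (surjective_of_apply_eq_one hy) hz]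
  simp only [sub_eq_zero]

end Plane

theorem stmt_14_general {R : Type*} [CommRing R] [Finite R] [Algebra (ZMod 2) R] {m : ℕ}
    (hR : Nat.card R = 2 ^ m) (T : R →ₗ[ZMod 2] ZMod 2) {u v : R × R}
    (hd : IsUnit (planeDet u v)) (huv : T (planeDet u v) = 1) {y : R} (hy : T y = 1) :
    Nat.card {h : R × R //
      h ≠ 0 ∧ planeDet (planeTransvection T h u) (planeTransvection T h v) = y} =
    if y = planeDet u v then 4 ^ (m - 1) + 3 * 2 ^ (m - 1) - 1 else 3 * 2 ^ (m - 1) := by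
  set moves := {h | planeDet (planeTransvection T h u) (planeTransvection T h v) = y}
  have ncard_moves : moves.ncard =
      (if y = planeDet u v then 4 ^ (m - 1) else 0) + 3 * 2 ^ (m - 1) := by
    rw [ncard_planeDet_planeTransvection_eq hd huv hy,
      natCard_ker_eq_two_pow (surjective_of_apply_eq_one hy) hR, ← pow_mul, mul_comm, pow_mul]
    norm_num
  have zero_mem : 0 ∈ moves ↔ y = planeDet u v := by
    simp only [moves, Set.mem_ofPred_eq, planeTransvection_zero, eq_comm]
  have nonzero_moves : {h | h ≠ 0 ∧ h ∈ moves} = moves \ {0} := Set.ext fun _ ↦ and_comm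
  change {h | h ≠ 0 ∧ h ∈ moves}.ncard = _
  rw [nonzero_moves]
  split_ifs with hyd
  · rw [Set.ncard_sdiff_singleton_of_mem (zero_mem.2 hyd), ncard_moves, if_pos hyd]
  · rw [Set.sdiff_singleton_eq_self (zero_mem.not.2 hyd), ncard_moves, if_neg hyd, zero_add]

theorem stmt_14 (m : ℕ) (hm : 1 ≤ m)
    (Tr : GaloisField 2 m → ZMod 2)
    (hTr : Tr = Algebra.trace (ZMod 2) (GaloisField 2 m))
    (τ : (GaloisField 2 m × GaloisField 2 m) →
      (GaloisField 2 m × GaloisField 2 m) →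
      (GaloisField 2 m × GaloisField 2 m))
    (hτ : ∀ h x, τ h x = x +
      (algebraMap (ZMod 2) (GaloisField 2 m) (Tr (x.1 * h.2 + x.2 * h.1))) • h)
    (det : (GaloisField 2 m × GaloisField 2 m) →
      (GaloisField 2 m × GaloisField 2 m) → GaloisField 2 m)
    (hdet : ∀ u v, det u v = u.1 * v.2 + u.2 * v.1)
    (a b : GaloisField 2 m) (ha : a ≠ 0) (hb : b ≠ 0) (hab : Tr (a * b) = 1)
    (y : GaloisField 2 m) (hy : Tr y = 1) :
    Nat.card {h : GaloisField 2 m × GaloisField 2 m //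
      h ≠ (0, 0) ∧ det (τ h (a, 0)) (τ h (0, b)) = y} =
    if y = a * b then 4 ^ (m - 1) + 3 * 2 ^ (m - 1) - 1
    else 3 * 2 ^ (m - 1) := by
  subst hTr
  obtain rfl : τ = planeTransvection (Algebra.trace (ZMod 2) (GaloisField 2 m)) :=
    funext₂ fun h x ↦ (hτ h x).trans <| by rw [algebraMap_smul]; rfl
  obtain rfl : det = planeDet := funext₂ hdet
  have hd : planeDet (a, 0) (0, b) = a * b := by simp [planeDet]
  rw [← hd] at hab ⊢
  exact stmt_14_general (GaloisField.card 2 m (by lia)) _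
    (hd ▸ (mul_ne_zero ha hb).isUnit) hab hy
end

section
/- (Stationary distribution of the edge-orbit chain.) The row vector w₁ := Sum.elim (fun _ => (1 : ℝ)/N) (fun _ => (1 : ℝ)) on Fin M₁ ⊕ Fin M₂ satisfies Matrix.vecMul w₁ Q₀ = w₁; that is, the distribution putting mass proportional to 1/N on each type-1 orbit and 1 on each type-2 orbit (the push-forward of the uniform distribution on directed edges) is stationary for the transvection Markov chain on edge orbits, for every matrix R with the given row and column sums. -/
open Matrix

/-!
Each block of `Q₀` has constant column sums, so on row vectors that are constant on the two orbit
types `Q₀` acts through a `2 × 2` quotient matrix. With `a = N ^ 2 - 4` and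
`N = 2 * (M₂ + 1)`, stationarity reduces to two scalar identities:
`a + N * (3 * N) = 4 * (N ^ 2 - 1)` and `6 * N + (a + M₂ * (6 * N)) = 4 * (N ^ 2 - 1)`.
-/

section ConstantColumnSums

variable {ι κ α : Type*} [Fintype ι]

lemma const_vecMul_of_sum_col_eq [NonUnitalNonAssocSemiring α] {A : Matrix ι κ α} {c : α}
    (hA : ∀ j, ∑ i, A i j = c) (x : α) :
    (fun _ => x) ᵥ* A = fun _ => x * c := by
  ext j
  rw [← hA j, Finset.mul_sum]
  rfl

lemma sumElim_const_vecMul_fromBlocks {ι' κ' : Type*} [Fintype ι'] [NonUnitalNonAssocSemiring α]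
    {A : Matrix ι κ α} {B : Matrix ι κ' α} {C : Matrix ι' κ α} {D : Matrix ι' κ' α}
    {a b c d : α} (hA : ∀ j, ∑ i, A i j = a) (hB : ∀ j, ∑ i, B i j = b)
    (hC : ∀ j, ∑ i, C i j = c) (hD : ∀ j, ∑ i, D i j = d) (x y : α) :
    Sum.elim (fun _ => x) (fun _ => y) ᵥ* fromBlocks A B C D =
      Sum.elim (fun _ => x * a + y * c) (fun _ => x * b + y * d) := by
  rw [vecMul_fromBlocks, Sum.elim_comp_inl, Sum.elim_comp_inr,
    const_vecMul_of_sum_col_eq hA, const_vecMul_of_sum_col_eq hB,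
    const_vecMul_of_sum_col_eq hC, const_vecMul_of_sum_col_eq hD]
  rfl

lemma sum_col_smul_one [DecidableEq ι] [NonAssocSemiring α] (a : α) (j : ι) :
    ∑ i, (a • (1 : Matrix ι ι α)) i j = a := by
  simp [one_apply]

lemma sum_col_smul_one_add_smul_ones [DecidableEq ι] [NonAssocSemiring α] (a b : α) (j : ι) :
    ∑ i, (a • (1 : Matrix ι ι α) + b • (Matrix.of fun _ _ => 1 : Matrix ι ι α)) i j =
      a + Fintype.card ι * b := by
  simp only [Matrix.add_apply, Finset.sum_add_distrib, sum_col_smul_one]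
  simp

lemma sum_col_smul_transpose_of_sum_row_eq [NonUnitalNonAssocSemiring α] {R : Matrix κ ι α} {r : α}
    (hR : ∀ i, ∑ j, R i j = r) (s : α) (i : κ) : ∑ j, (s • Rᵀ) j i = s * r := by
  rw [← hR i, Finset.mul_sum]
  rfl

end ConstantColumnSums

lemma four_mul_sq_two_mul_add_one_sub_one_ne_zero {K : Type*} [Ring K] [CharZero K] (n : ℕ) :
    (4 * ((2 * (n + 1)) ^ 2 - 1) : K) ≠ 0 := by
  have hfactor : (4 * ((2 * (n + 1)) ^ 2 - 1) : K) =
      ((4 * (2 * n + 1) * (2 * n + 3) : ℕ) : K) := by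
    push_cast
    noncomm_ring
  rw [hfactor]
  exact_mod_cast (by positivity : 4 * (2 * n + 1) * (2 * n + 3) ≠ 0)

theorem stmt_18_general {K ι κ : Type*} [Field K] [CharZero K]
    [Fintype ι] [DecidableEq ι] [Fintype κ] [DecidableEq κ]
    {N : K} (hN : N = 2 * (Fintype.card κ + 1)) {R : Matrix κ ι K}
    (hrow : ∀ i, ∑ j, R i j = 6 * N) (hcol : ∀ j, ∑ i, R i j = 3 * N) :
    Sum.elim (fun _ => 1 / N) (fun _ => 1) ᵥ* ((4 * (N ^ 2 - 1))⁻¹ •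
      fromBlocks ((N ^ 2 - 4) • (1 : Matrix ι ι K)) (N • Rᵀ) R
        ((N ^ 2 - 4) • (1 : Matrix κ κ K) + (6 * N) • Matrix.of fun _ _ => 1)) =
      Sum.elim (fun _ => 1 / N) (fun _ => 1) := by
  have hN_ne : N ≠ 0 := by
    rw [hN]
    exact_mod_cast (by positivity : 2 * (Fintype.card κ + 1) ≠ 0)
  have hden_ne : 4 * (N ^ 2 - 1) ≠ 0 := by
    rw [hN]
    exact four_mul_sq_two_mul_add_one_sub_one_ne_zero _
  have htype₁ : 1 / N * (N ^ 2 - 4) + 1 * (3 * N) = 4 * (N ^ 2 - 1) * (1 / N) := by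
    field_simp
    ring
  have htype₂ : 1 / N * (N * (6 * N)) + 1 * (N ^ 2 - 4 + Fintype.card κ * (6 * N)) =
      4 * (N ^ 2 - 1) * 1 := by
    field_simp
    linear_combination -3 * N * hN
  rw [vecMul_smul, sumElim_const_vecMul_fromBlocks (sum_col_smul_one _)
    (sum_col_smul_transpose_of_sum_row_eq hrow N) hcol (sum_col_smul_one_add_smul_ones _ _),
    htype₁, htype₂]
  ext (_ | _) <;> exact inv_mul_cancel_left₀ hden_ne _

lemma two_pow_eq_two_mul_half_add_one {α : Type*} [Semiring α] {m : ℕ} (hm : m ≠ 0) :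
    (2 ^ m : α) = 2 * (((2 ^ m - 2) / 2 : ℕ) + 1) := by
  have heven : 2 ∣ 2 ^ m := dvd_pow_self 2 hm
  have htwo_le : 2 ≤ 2 ^ m := Nat.le_self_pow hm 2
  have hnat : 2 ^ m = 2 * ((2 ^ m - 2) / 2 + 1) := by omega
  exact_mod_cast congrArg (Nat.cast : ℕ → α) hnat

theorem stmt_18 (m : ℕ) (hm : 2 ≤ m)
    (N : ℝ) (hN : N = 2 ^ m)
    (M₁ M₂ : ℕ) (hM₁ : M₁ = 2 ^ m - 2) (hM₂ : M₂ = (2 ^ m - 2) / 2)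
    (R : Matrix (Fin M₂) (Fin M₁) ℝ)
    (hrow : ∀ i, ∑ j, R i j = 6 * N)
    (hcol : ∀ j, ∑ i, R i j = 3 * N)
    (Q₀ : Matrix (Fin M₁ ⊕ Fin M₂) (Fin M₁ ⊕ Fin M₂) ℝ)
    (hQ : Q₀ = (4 * (N ^ 2 - 1) : ℝ)⁻¹ •
      Matrix.fromBlocks
        ((N ^ 2 - 4) • (1 : Matrix (Fin M₁) (Fin M₁) ℝ))
        (N • Rᵀ)
        R
        ((N ^ 2 - 4) • (1 : Matrix (Fin M₂) (Fin M₂) ℝ) +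
          (6 * N) • (Matrix.of fun _ _ => (1 : ℝ)))) :
    Matrix.vecMul (Sum.elim (fun _ => (1 : ℝ) / N) (fun _ => (1 : ℝ))) Q₀ =
      Sum.elim (fun _ => (1 : ℝ) / N) (fun _ => (1 : ℝ)) := by
  subst hQ hN hM₂
  exact stmt_18_general (by rw [Fintype.card_fin, ← two_pow_eq_two_mul_half_add_one (by omega)])
    hrow hcol
end

section
/- (Second eigenvector of the edge-orbit chain.) The row vector w₂ := Sum.elim (fun _ => (1 : ℝ)) (fun _ => (-2 : ℝ)) on Fin M₁ ⊕ Fin M₂ satisfies Matrix.vecMul w₂ Q₀ = ((N² − 6*N − 4)/(4*(N² − 1))) • w₂; that is, w₂ is a left eigenvector of Q₀ with eigenvalue (N² − 6N − 4)/(4(N² − 1)), for every matrix R with the given row and column sums. -/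
/-!
The partition into the two orbit types is equitable: every block has constant column sums. A row
vector constant on each type is therefore acted on through the `2 × 2` matrix of block column sums,
which, up to the normalising factor, is `!![N² - 4, 6 N²; 3 N, N² - 4 + 6 N M₂]`. Since
`2 M₂ = N - 2`, its last entry is `4 N² - 6 N - 4`, and `(1, -2)` is a left eigenvector with
eigenvalue `N² - 6 N - 4`.
-/

open Matrix

theorem vecMul_sumElim_const_fromBlocks {l m n o K : Type*} [Fintype n] [Fintype o]
    [NonUnitalNonAssocSemiring K]
    {A : Matrix n l K} {B : Matrix n m K} {C : Matrix o l K} {D : Matrix o m K} {p q r s : K}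
    (hA : ∀ j, ∑ i, A i j = p) (hB : ∀ j, ∑ i, B i j = q)
    (hC : ∀ j, ∑ i, C i j = r) (hD : ∀ j, ∑ i, D i j = s) (a b : K) :
    Sum.elim (fun _ => a) (fun _ => b) ᵥ* fromBlocks A B C D =
      Sum.elim (fun _ => a * p + b * r) (fun _ => a * q + b * s) := by
  funext x
  rcases x with j | j
  · simp [vecMul, dotProduct, ← Finset.mul_sum, hA, hC]
  · simp [vecMul, dotProduct, ← Finset.mul_sum, hB, hD]

theorem sum_smul_one_apply {n K : Type*} [Fintype n] [DecidableEq n] [NonAssocSemiring K]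
    (a : K) (j : n) : ∑ i, (a • (1 : Matrix n n K)) i j = a := by
  simp [one_apply]

theorem sum_smul_one_add_smul_of_one_apply {n K : Type*} [Fintype n] [DecidableEq n]
    [NonAssocSemiring K] (a b : K) (j : n) :
    ∑ i, (a • 1 + b • of fun _ _ => 1 : Matrix n n K) i j = a + Fintype.card n * b := by
  simp only [Matrix.add_apply, Finset.sum_add_distrib, sum_smul_one_apply]
  simp

theorem two_mul_half_two_pow_sub_two_add_two {m : ℕ} (hm : m ≠ 0) :
    2 * ((2 ^ m - 2) / 2) + 2 = 2 ^ m := by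
  obtain ⟨k, rfl⟩ := Nat.exists_eq_succ_of_ne_zero hm
  have one_le_two_pow : 1 ≤ 2 ^ k := Nat.one_le_two_pow
  rw [pow_succ]
  omega

theorem stmt_19_general {α β K : Type*} [Fintype α] [Fintype β] [DecidableEq α] [DecidableEq β]
    [CommRing K] {N : K} (hN : N = 2 * Fintype.card β + 2) {R : Matrix β α K}
    (hrow : ∀ i, ∑ j, R i j = 6 * N) (hcol : ∀ j, ∑ i, R i j = 3 * N) (c : K) :
    Sum.elim (fun _ => (1 : K)) (fun _ => (-2 : K)) ᵥ*
        (c • fromBlocks ((N ^ 2 - 4) • (1 : Matrix α α K)) (N • Rᵀ) R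
          ((N ^ 2 - 4) • (1 : Matrix β β K) + (6 * N) • of fun _ _ => (1 : K))) =
      (c * (N ^ 2 - 6 * N - 4)) • Sum.elim (fun _ => (1 : K)) (fun _ => (-2 : K)) := by
  have sum_smul_transpose : ∀ j, ∑ i, (N • Rᵀ) i j = N * (6 * N) := fun j => by
    simp only [Matrix.smul_apply, transpose_apply, smul_eq_mul, ← Finset.mul_sum, hrow]
  have eigen_left : 1 * (N ^ 2 - 4) + -2 * (3 * N) = (N ^ 2 - 6 * N - 4) * 1 := by ring
  have eigen_right : 1 * (N * (6 * N)) + -2 * (N ^ 2 - 4 + Fintype.card β * (6 * N)) =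
      (N ^ 2 - 6 * N - 4) * -2 := by
    linear_combination (6 * N) * hN
  rw [vecMul_smul, vecMul_sumElim_const_fromBlocks (sum_smul_one_apply _) sum_smul_transpose hcol
    (sum_smul_one_add_smul_of_one_apply _ _), eigen_left, eigen_right, mul_smul]
  congr 1
  funext x
  cases x <;> rfl

theorem stmt_19 (m : ℕ) (hm : 2 ≤ m)
    (N : ℝ) (hN : N = 2 ^ m)
    (M₁ M₂ : ℕ) (hM₁ : M₁ = 2 ^ m - 2) (hM₂ : M₂ = (2 ^ m - 2) / 2)
    (R : Matrix (Fin M₂) (Fin M₁) ℝ)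
    (hrow : ∀ i, ∑ j, R i j = 6 * N)
    (hcol : ∀ j, ∑ i, R i j = 3 * N)
    (Q₀ : Matrix (Fin M₁ ⊕ Fin M₂) (Fin M₁ ⊕ Fin M₂) ℝ)
    (hQ : Q₀ = (4 * (N ^ 2 - 1) : ℝ)⁻¹ •
      Matrix.fromBlocks
        ((N ^ 2 - 4) • (1 : Matrix (Fin M₁) (Fin M₁) ℝ))
        (N • Rᵀ)
        R
        ((N ^ 2 - 4) • (1 : Matrix (Fin M₂) (Fin M₂) ℝ) +
          (6 * N) • (Matrix.of fun _ _ => (1 : ℝ)))) :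
    Matrix.vecMul (Sum.elim (fun _ => (1 : ℝ)) (fun _ => (-2 : ℝ))) Q₀ =
      ((N ^ 2 - 6 * N - 4) / (4 * (N ^ 2 - 1))) •
        Sum.elim (fun _ => (1 : ℝ)) (fun _ => (-2 : ℝ)) := by
  have hcard : N = 2 * Fintype.card (Fin M₂) + 2 := by
    rw [hN, Fintype.card_fin, hM₂]
    exact_mod_cast (two_mul_half_two_pow_sub_two_add_two (by omega)).symm
  rw [hQ, div_eq_inv_mul]
  exact stmt_19_general hcard hrow hcol _
end
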